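/- Let P be a finite set of points in the Euclidean plane such that all pairwise distances between distinct points of P are distinct, and let r, b ⊆ P with r ∪ b = P. Let T1 be the Euclidean minimum spanning tree of r, let T2 be any T1-minimum spanning tree of b (where the T1-weight of a pair is 0 if it is an edge of T1 and the Euclidean distance otherwise), and let T3 be any (T1 ∪ T2)-minimum spanning tree of r (weights 0 on edges of T1 or T2, Euclidean distance otherwise). Then every edge of T3 is an edge of T1 or of T2; in particular, the third minimum-spanning-tree computation adds no new edge, and no new edge with both endpoints in r ∩ b, so the support T2 ∪ T3 is contained in the support T1 ∪ T2. -/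

import Mathlib

noncomputable section

/-- Points in the Euclidean plane. -/
abbrev Pt : Type := EuclideanSpace ℝ (Fin 2)

noncomputable instance : DecidableEq Pt := Classical.decEq _

/-- Length of an edge (an unordered pair of points): the Euclidean distance
between its endpoints. -/
def edgeLen : Sym2 Pt → ℝ := Sym2.lift ⟨fun u v => dist u v, fun u v => dist_comm u v⟩

/-- Total length of a graph given by its finite edge set: the sum of the Euclidean
lengths of its edges. -/
def graphLength (E : Finset (Sym2 Pt)) : ℝ := ∑ e ∈ E, edgeLen e

/-- Closed straight-line segment joining the endpoints of an edge. -/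
def edgeSeg : Sym2 Pt → Set Pt :=
  Sym2.lift ⟨fun u v => segment ℝ u v, fun u v => segment_symm ℝ u v⟩

/-- The edges in `E` are unordered pairs of distinct points of `V`. -/
def EdgesOn (V : Finset Pt) (E : Finset (Sym2 Pt)) : Prop :=
  ∀ e ∈ E, ¬ e.IsDiag ∧ ∀ p ∈ e, p ∈ V

/-- The subgraph induced by `s` of the graph with edge set `E` is connected. -/
def InducedConnected (E : Finset (Sym2 Pt)) (s : Finset Pt) : Prop :=
  ((SimpleGraph.fromEdgeSet (↑E : Set (Sym2 Pt))).induce (↑s : Set Pt)).Connected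

/-- The graph with edge set `E` is a tree (connected and acyclic) on vertex set `V`. -/
def IsTreeOn (V : Finset Pt) (E : Finset (Sym2 Pt)) : Prop :=
  ((SimpleGraph.fromEdgeSet (↑E : Set (Sym2 Pt))).induce (↑V : Set Pt)).IsTree

/-- The straight-line drawing of the graph with edge set `E` is plane: the closed
straight-line segments of any two distinct edges intersect only in points that are
endpoints of both edges. -/
def IsPlane (E : Finset (Sym2 Pt)) : Prop :=
  ∀ e ∈ E, ∀ f ∈ E, e ≠ f → ∀ x ∈ edgeSeg e ∩ edgeSeg f, x ∈ e ∧ x ∈ f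

/-- `T` is a Euclidean minimum spanning tree of the point set `P`: a spanning tree of
the complete graph on `P` minimizing the total Euclidean edge length. -/
def IsEMST (P : Finset Pt) (T : Finset (Sym2 Pt)) : Prop :=
  EdgesOn P T ∧ IsTreeOn P T ∧
    ∀ T' : Finset (Sym2 Pt), EdgesOn P T' → IsTreeOn P T' → graphLength T ≤ graphLength T'

/-- Total `F`-weight of edge set `E`: edges in `F` have weight `0`, all other edges
their Euclidean length. -/
def fWeight (F E : Finset (Sym2 Pt)) : ℝ := ∑ e ∈ E, if e ∈ F then 0 else edgeLen e

/-- `T` is an `F`-minimum spanning tree of `P`: a spanning tree of the complete graph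
on `P` minimizing the total `F`-weight. -/
def IsFMST (F : Finset (Sym2 Pt)) (P : Finset Pt) (T : Finset (Sym2 Pt)) : Prop :=
  EdgesOn P T ∧ IsTreeOn P T ∧
    ∀ T' : Finset (Sym2 Pt), EdgesOn P T' → IsTreeOn P T' → fWeight F T ≤ fWeight F T'

/-- All pairwise distances between distinct points of `P` are distinct: two pairs of
distinct points of `P` at equal distance must be the same unordered pair. -/
def DistinctDistances (P : Finset Pt) : Prop :=
  ∀ p ∈ P, ∀ q ∈ P, ∀ u ∈ P, ∀ v ∈ P, p ≠ q → u ≠ v →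
    dist p q = dist u v → s(p, q) = s(u, v)

theorem edgeLen_nonneg (e : Sym2 Pt) : 0 ≤ edgeLen e := by
  induction e with
  | _ u v => exact dist_nonneg (x := u) (y := v)

theorem edgeLen_eq_zero_iff {e : Sym2 Pt} : edgeLen e = 0 ↔ e.IsDiag := by
  induction e with
  | _ u v => exact (dist_eq_zero (x := u) (y := v)).trans Sym2.mk_isDiag_iff.symm

theorem fWeight_nonneg (F E : Finset (Sym2 Pt)) : 0 ≤ fWeight F E :=
  Finset.sum_nonneg fun e _ ↦ ite_nonneg le_rfl (edgeLen_nonneg e)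

theorem fWeight_eq_zero_iff {F E : Finset (Sym2 Pt)} (hE : ∀ e ∈ E, ¬ e.IsDiag) :
    fWeight F E = 0 ↔ E ⊆ F := by
  have weight_eq_zero_iff : ∀ e ∈ E, (if e ∈ F then 0 else edgeLen e) = 0 ↔ e ∈ F :=
    fun e he ↦ by simp [edgeLen_eq_zero_iff, hE e he]
  exact (Finset.sum_eq_zero_iff_of_nonneg fun e _ ↦ ite_nonneg le_rfl (edgeLen_nonneg e)).trans
    (forall₂_congr weight_eq_zero_iff)

/-- In the iteration `F` is the support built so far and `T` an earlier tree on `r`: as `T` has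
`F`-weight zero, a minimizer can only use edges of weight zero. -/
theorem mst_iteration_stabilizes_general {r : Finset Pt} {F T T' : Finset (Sym2 Pt)}
    (hTr : EdgesOn r T) (hT : IsTreeOn r T) (hTF : T ⊆ F) (hT' : IsFMST F r T') :
    T' ⊆ F := by
  obtain ⟨hT'r, -, hmin⟩ := hT'
  refine (fWeight_eq_zero_iff fun e he ↦ (hT'r e he).1).1 (le_antisymm ?_ (fWeight_nonneg F T'))
  calc
    fWeight F T' ≤ fWeight F T := hmin T hTr hT
    _ = 0 := (fWeight_eq_zero_iff fun e he ↦ (hTr e he).1).2 hTF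

/-- For `r ∪ b = P` with all pairwise distances of `P` distinct, let
`T1` be the EMST of `r`, `T2` a `T1`-minimum spanning tree of `b`, and `T3` a
`(T1 ∪ T2)`-minimum spanning tree of `r`. Then every edge of `T3` is an edge of `T1` or
of `T2`; in particular no new edge (and no new edge with both endpoints in `r ∩ b`) is
added, and the support `T2 ∪ T3` is contained in the support `T1 ∪ T2`. -/
theorem mst_iteration_stabilizes (P : Finset Pt) (hdist : DistinctDistances P)
    (r b : Finset Pt) (hr : r ⊆ P) (hb : b ⊆ P) (hcover : r ∪ b = P)
    (T1 T2 T3 : Finset (Sym2 Pt))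
    (hT1 : IsEMST r T1)
    (hT2 : IsFMST T1 b T2)
    (hT3 : IsFMST (T1 ∪ T2) r T3) :
    (∀ e ∈ T3, e ∈ T1 ∨ e ∈ T2) ∧
    (∀ e ∈ T3, (∀ p ∈ e, p ∈ r ∩ b) → e ∈ T1 ∪ T2) ∧
    T2 ∪ T3 ⊆ T1 ∪ T2 := by
  have hT3_sub := mst_iteration_stabilizes_general hT1.1 hT1.2.1 Finset.subset_union_left hT3
  exact ⟨fun e he ↦ Finset.mem_union.1 (hT3_sub he), fun e he _ ↦ hT3_sub he,
    Finset.union_subset Finset.subset_union_right hT3_sub⟩
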